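/- arXiv:1208.5226 — 6 statements merged into one kernel-verified Lean document; each statement's English description precedes it below -/
import Mathlib

section
/- (Lemma 2.1, Li–Yau) Let F be a real-valued measurable function on ℝⁿ with 0 ≤ F(ξ) ≤ M₁ for all ξ, and assume ∫_{ℝⁿ} |ξ|² F(ξ) dξ ≤ M₂. Then ∫_{ℝⁿ} F(ξ) dξ ≤ ((n+2)/n)^{n/(n+2)} · M₂^{n/(n+2)} · (M₁ B_n)^{2/(n+2)}. -/
open MeasureTheory Real

/-
Among all densities `0 ≤ f ≤ M₁` of given mass, the moment `∫ ‖x‖ ^ p f` is smallest for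
`M₁ • 1_B`, where `B` is the centred ball on which this density has the prescribed mass. If `B` has
radius `R` and `m = M₁ vol (ball 0 1)`, that mass is `m R ^ d` and that moment is
`d / (d + p) * m R ^ (d + p)`; eliminating `R` bounds the mass by the moment.
-/

open Set Metric Module

open scoped ENNReal

theorem mul_setLIntegral_lt_le_lintegral_mul {α : Type*} [MeasurableSpace α] {μ : Measure α}
    {w f : α → ℝ≥0∞} {c M : ℝ≥0∞} (hw : AEMeasurable w μ) (hc : c ≠ ∞)
    (hf : ∀ᵐ x ∂μ, f x ≤ M) (hfin : M * μ {x | w x < c} ≠ ∞)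
    (hmass : M * μ {x | w x < c} ≤ ∫⁻ x, f x ∂μ) :
    M * ∫⁻ x in {x | w x < c}, w x ∂μ ≤ ∫⁻ x, w x * f x ∂μ := by
  set S := {x | w x < c}
  have hS : NullMeasurableSet S μ := nullMeasurableSet_lt hw aemeasurable_const
  -- This is `(c - w) * (M * 1_S - f) ≥ 0`, with the terms moved so that no subtraction occurs.
  have rearrange : ∀ᵐ x ∂μ,
      S.indicator (fun x ↦ M * w x) x + c * f x ≤ S.indicator (fun _ ↦ c * M) x + w x * f x := by
    filter_upwards [hf] with x hfx
    by_cases hx : x ∈ S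
    · obtain ⟨a, ha⟩ := exists_add_of_le hfx
      obtain ⟨b, hb⟩ := exists_add_of_le (le_of_lt (show w x < c from hx))
      calc S.indicator (fun x ↦ M * w x) x + c * f x
          = (f x + a) * w x + (w x + b) * f x := by rw [indicator_of_mem hx, ha, hb]
        _ ≤ (f x + a) * w x + (w x + b) * f x + b * a := le_self_add
        _ = (w x + b) * (f x + a) + w x * f x := by ring
        _ = S.indicator (fun _ ↦ c * M) x + w x * f x := by rw [indicator_of_mem hx, ha, hb]
    · simpa only [indicator_of_notMem hx, zero_add] using
        mul_le_mul_left (not_lt.mp (show ¬ w x < c from hx)) (f x)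
  refine (ENNReal.add_le_add_iff_right (ENNReal.mul_ne_top hc hfin)).mp ?_
  calc M * ∫⁻ x in S, w x ∂μ + c * (M * μ S)
      ≤ M * ∫⁻ x in S, w x ∂μ + c * ∫⁻ x, f x ∂μ := by gcongr
    _ ≤ ∫⁻ x, S.indicator (fun x ↦ M * w x) x ∂μ + ∫⁻ x, c * f x ∂μ := by
      rw [lintegral_indicator₀ hS, lintegral_const_mul'' M hw.restrict]
      gcongr
      exact lintegral_const_mul_le ..
    _ = ∫⁻ x, S.indicator (fun x ↦ M * w x) x + c * f x ∂μ :=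
      (lintegral_add_left' ((hw.const_mul M).indicator₀ hS) _).symm
    _ ≤ ∫⁻ x, S.indicator (fun _ ↦ c * M) x + w x * f x ∂μ := lintegral_mono_ae rearrange
    _ = ∫⁻ x, w x * f x ∂μ + c * (M * μ S) := by
      rw [lintegral_add_left' (aemeasurable_const.indicator₀ hS), lintegral_indicator_const₀ hS,
        mul_assoc, add_comm]

theorem mul_rpow_le_of_mul_rpow_add_le {d p m R a : ℝ} (hd : 0 < d) (hp : 0 < p) (hm : 0 ≤ m)
    (hR : 0 ≤ R) (h : d / (d + p) * (m * R ^ (d + p)) ≤ a) :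
    m * R ^ d ≤ ((d + p) / d) ^ (d / (d + p)) * a ^ (d / (d + p)) * m ^ (p / (d + p)) := by
  have ha : 0 ≤ a := h.trans' (by positivity)
  have h' : m * R ^ (d + p) ≤ (d + p) / d * a := by
    rw [div_mul_eq_mul_div, div_le_iff₀ (by positivity)] at h
    rw [div_mul_eq_mul_div, le_div_iff₀ hd]
    linarith
  calc m * R ^ d
      = m ^ (d / (d + p) + p / (d + p)) * R ^ ((d + p) * (d / (d + p))) := by
        rw [← add_div, div_self (by positivity), rpow_one, mul_div_cancel₀ _ (by positivity)]
    _ = (m * R ^ (d + p)) ^ (d / (d + p)) * m ^ (p / (d + p)) := by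
        rw [rpow_add_of_nonneg hm (by positivity) (by positivity), rpow_mul hR,
          mul_rpow hm (by positivity)]
        ring
    _ ≤ ((d + p) / d * a) ^ (d / (d + p)) * m ^ (p / (d + p)) := by gcongr
    _ = ((d + p) / d) ^ (d / (d + p)) * a ^ (d / (d + p)) * m ^ (p / (d + p)) := by
        rw [mul_rpow (by positivity) ha]

theorem pow_pred_mul_rpow {d : ℕ} (hd : 0 < d) (p : ℝ) {y : ℝ} (hy : 0 < y) :
    y ^ (d - 1) * y ^ p = y ^ (d + p - 1) := by
  rw [← rpow_natCast, ← rpow_add hy, Nat.cast_pred hd]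
  ring_nf

section HaarMeasure

variable {E : Type*} [NormedAddCommGroup E] [NormedSpace ℝ E] [FiniteDimensional ℝ E]
  [Nontrivial E] [MeasurableSpace E] [BorelSpace E] (μ : Measure E) [μ.IsAddHaarMeasure]

theorem integrableOn_ball_norm_rpow {p : ℝ} (hp : -finrank ℝ E < p) (R : ℝ) :
    IntegrableOn (fun x : E ↦ ‖x‖ ^ p) (ball 0 R) μ := by
  rcases le_total R 0 with hR | hR
  · simp [ball_eq_empty.mpr hR]
  have hint : IntegrableOn (fun y : ℝ ↦ y ^ (finrank ℝ E + p - 1)) (Ioo 0 R) :=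
    (intervalIntegrable_iff_integrableOn_Ioo_of_le hR).mp <|
      intervalIntegral.intervalIntegrable_rpow' (by linarith)
  exact (integrableOn_fun_norm_addHaar μ (f := (· ^ p))).mpr <|
    hint.congr_fun (fun y hy ↦ (pow_pred_mul_rpow finrank_pos p hy.1).symm) measurableSet_Ioo

theorem setIntegral_ball_norm_rpow {p R : ℝ} (hp : -finrank ℝ E < p) (hR : 0 ≤ R) :
    ∫ x in ball (0 : E) R, ‖x‖ ^ p ∂μ =
      finrank ℝ E / (finrank ℝ E + p) * (μ.real (ball 0 1) * R ^ (finrank ℝ E + p)) := by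
  have radial : ∫ y in Ioi (0 : ℝ), y ^ (finrank ℝ E - 1) • (Iio R).indicator (· ^ p) y =
      R ^ (finrank ℝ E + p) / (finrank ℝ E + p) := by
    calc ∫ y in Ioi (0 : ℝ), y ^ (finrank ℝ E - 1) • (Iio R).indicator (· ^ p) y
        = ∫ y in Ioi (0 : ℝ), (Iio R).indicator (fun y ↦ y ^ (finrank ℝ E + p - 1)) y :=
          setIntegral_congr_fun measurableSet_Ioi fun y hy ↦ by
            simp [indicator_apply, pow_pred_mul_rpow finrank_pos p hy]
      _ = ∫ y in (0 : ℝ)..R, y ^ (finrank ℝ E + p - 1) := by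
          rw [setIntegral_indicator measurableSet_Iio, Ioi_inter_Iio,
            ← integral_Ioc_eq_integral_Ioo, intervalIntegral.integral_of_le hR]
      _ = R ^ (finrank ℝ E + p) / (finrank ℝ E + p) := by
          rw [integral_rpow (.inl (by linarith)), sub_add_cancel, zero_rpow (by linarith), sub_zero]
  calc ∫ x in ball (0 : E) R, ‖x‖ ^ p ∂μ
      = ∫ x, (Iio R).indicator (· ^ p) ‖x‖ ∂μ := by
        rw [← integral_indicator measurableSet_ball]
        exact integral_congr_ae <| .of_forall fun x ↦ by by_cases hx : ‖x‖ < R <;> simp [hx]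
    _ = finrank ℝ E / (finrank ℝ E + p) * (μ.real (ball 0 1) * R ^ (finrank ℝ E + p)) := by
        rw [integral_fun_norm_addHaar, radial, nsmul_eq_mul, smul_eq_mul]
        ring

variable {μ} {p M₁ M₂ : ℝ} {f : E → ℝ≥0∞}

theorem ofReal_ball_moment_le_lintegral_norm_rpow_mul {R : ℝ} (hp : 0 < p) (hR : 0 ≤ R)
    (hM₁ : 0 ≤ M₁) (hf : ∀ᵐ x ∂μ, f x ≤ ENNReal.ofReal M₁)
    (hmass : ENNReal.ofReal M₁ * μ (ball 0 R) ≤ ∫⁻ x, f x ∂μ) :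
    ENNReal.ofReal (finrank ℝ E / (finrank ℝ E + p) *
        (M₁ * μ.real (ball 0 1) * R ^ (finrank ℝ E + p))) ≤
      ∫⁻ x, ENNReal.ofReal (‖x‖ ^ p) * f x ∂μ := by
  have hball : {x : E | ENNReal.ofReal (‖x‖ ^ p) < ENNReal.ofReal (R ^ p)} = ball 0 R := by
    ext x
    simp [ENNReal.ofReal_lt_ofReal_iff_of_nonneg, rpow_nonneg,
      rpow_lt_rpow_iff (norm_nonneg x) hR hp]
  have hp' : -(finrank ℝ E : ℝ) < p := by linarith [(finrank ℝ E).cast_nonneg (α := ℝ)]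
  calc _ = ENNReal.ofReal M₁ * ∫⁻ x in ball (0 : E) R, ENNReal.ofReal (‖x‖ ^ p) ∂μ := by
        rw [← ofReal_integral_eq_lintegral_ofReal (integrableOn_ball_norm_rpow μ hp' R)
          (.of_forall fun x ↦ by positivity), setIntegral_ball_norm_rpow μ hp' hR,
          ← ENNReal.ofReal_mul hM₁]
        ring_nf
    _ ≤ ∫⁻ x, ENNReal.ofReal (‖x‖ ^ p) * f x ∂μ := by
        rw [← hball] at hmass ⊢
        refine mul_setLIntegral_lt_le_lintegral_mul (by fun_prop) ENNReal.ofReal_ne_top hf ?_ hmass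
        exact hball ▸ ENNReal.mul_ne_top ENNReal.ofReal_ne_top measure_ball_lt_top.ne

theorem stmt2_general (hp : 0 < p) (hM₁ : 0 ≤ M₁) (hM₂ : 0 ≤ M₂)
    (hf : ∀ᵐ x ∂μ, f x ≤ ENNReal.ofReal M₁)
    (hmom : ∫⁻ x, ENNReal.ofReal (‖x‖ ^ p) * f x ∂μ ≤ ENNReal.ofReal M₂) :
    ∫⁻ x, f x ∂μ ≤ ENNReal.ofReal
      (((finrank ℝ E + p) / finrank ℝ E) ^ (finrank ℝ E / (finrank ℝ E + p)) *
        M₂ ^ (finrank ℝ E / (finrank ℝ E + p)) *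
          (M₁ * μ.real (ball 0 1)) ^ (p / (finrank ℝ E + p))) := by
  rcases hM₁.eq_or_lt with rfl | hM₁pos
  · have hf0 : f =ᵐ[μ] 0 := by simpa [Filter.EventuallyEq] using hf
    simp [lintegral_congr_ae hf0]
  have hd : 0 < (finrank ℝ E : ℝ) := by exact_mod_cast finrank_pos
  have hB : 0 < μ.real (ball (0 : E) 1) :=
    ENNReal.toReal_pos (measure_ball_pos μ 0 one_pos).ne' measure_ball_lt_top.ne
  -- The mass might be infinite, so the extremal ball is chosen for each finite `J` below it.
  refine ENNReal.le_of_forall_nnreal_lt fun J hJ ↦ ?_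
  obtain ⟨R, hR, hRJ⟩ : ∃ R : ℝ, 0 ≤ R ∧ M₁ * μ.real (ball (0 : E) 1) * R ^ finrank ℝ E = J :=
    ⟨(J / (M₁ * μ.real (ball (0 : E) 1))) ^ (finrank ℝ E : ℝ)⁻¹, by positivity, by
      rw [rpow_inv_natCast_pow (by positivity) finrank_pos.ne', mul_div_cancel₀ _ (by positivity)]⟩
  have hmass : ENNReal.ofReal M₁ * μ (ball (0 : E) R) = J := by
    rw [Measure.addHaar_ball μ 0 hR, ← ENNReal.ofReal_coe_nnreal, ← hRJ,
      ← ofReal_measureReal measure_ball_lt_top.ne, ← ENNReal.ofReal_mul (by positivity),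
      ← ENNReal.ofReal_mul hM₁]
    ring_nf
  have hmoment : finrank ℝ E / (finrank ℝ E + p) *
      (M₁ * μ.real (ball (0 : E) 1) * R ^ (finrank ℝ E + p)) ≤ M₂ :=
    (ENNReal.ofReal_le_ofReal_iff hM₂).mp <|
      (ofReal_ball_moment_le_lintegral_norm_rpow_mul hp hR hM₁ hf
        (hmass.trans_le hJ.le)).trans hmom
  rw [← ENNReal.ofReal_coe_nnreal, ← hRJ, ← rpow_natCast]
  exact ENNReal.ofReal_le_ofReal <|
    mul_rpow_le_of_mul_rpow_add_le hd hp (by positivity) hR hmoment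

end HaarMeasure

/-- Lemma 2.1, Li–Yau: if `F : ℝⁿ → ℝ` is measurable with `0 ≤ F ≤ M₁` and
`∫ |ξ|² F(ξ) dξ ≤ M₂`, then
`∫ F ≤ ((n+2)/n)^{n/(n+2)} M₂^{n/(n+2)} (M₁ B_n)^{2/(n+2)}`,
where `B_n` is the volume of the unit ball in `ℝⁿ`. -/
theorem stmt2 (n : ℕ) (hn : 1 ≤ n) (F : EuclideanSpace ℝ (Fin n) → ℝ)
    (hFmeas : Measurable F) (M₁ M₂ : ℝ) (hM₁ : 0 ≤ M₁) (hM₂ : 0 ≤ M₂)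
    (hF0 : ∀ ξ, 0 ≤ F ξ) (hFle : ∀ ξ, F ξ ≤ M₁)
    (hmom : ∫⁻ ξ, ENNReal.ofReal (‖ξ‖ ^ 2 * F ξ) ≤ ENNReal.ofReal M₂) :
    ∫⁻ ξ, ENNReal.ofReal (F ξ) ≤
      ENNReal.ofReal
        ((((n : ℝ) + 2) / n) ^ ((n : ℝ) / (n + 2)) * M₂ ^ ((n : ℝ) / (n + 2)) *
          (M₁ * (volume (Metric.ball (0 : EuclideanSpace ℝ (Fin n)) 1)).toReal) ^
            ((2 : ℝ) / (n + 2))) := by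
  have : Nonempty (Fin n) := ⟨⟨0, hn⟩⟩
  simpa [measureReal_def] using stmt2_general (μ := volume) two_pos hM₁ hM₂
    (.of_forall fun ξ ↦ ENNReal.ofReal_le_ofReal (hFle ξ))
    (by simpa [ENNReal.ofReal_mul] using hmom)
end

section
/- (Lemma 2.3) Let λ > 0, let p be a positive integer, and let f ∈ C^p([0, 1/(2√λ)]) be a real-valued function such that f^{(p)} is not identically zero. Then at least one of the following two inequalities holds: max |f′| ≤ 2^{p−1} (max |f^{(p)}|)^{1/p} (max |f|)^{1−1/p}, or max |f′| < 4^{p+1} λ^{1/2} max |f|, where all maxima are taken over [0, 1/(2√λ)]. -/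
open Real

/-! Landau's inequality: Taylor's formula `f(x ± h) = f(x) ± h f′(x) + R` with remainder
`‖R‖ ≤ max ‖f″‖ h² / 2` is used with the step `h = 4 max ‖f‖ / ‖f′(x)‖`. If one of `x ± h` lies in
the interval, it gives `‖f′(x)‖² ≤ 4 max ‖f‖ max ‖f″‖`. Otherwise `h` exceeds half of the length of
the interval, which already bounds `‖f′(x)‖` by `max ‖f‖`. Higher orders follow by induction, the
inductive hypothesis being applied to `f′`. In the root-free form
`(max ‖f′‖)ⁿ⁺¹ ≤ (2ⁿ)ⁿ⁺¹ max ‖f⁽ⁿ⁺¹⁾‖ (max ‖f‖)ⁿ` the constants multiply up exactly. -/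

variable {E : Type*} [NormedAddCommGroup E]

section SupNorm

variable {α : Type*} {s : Set α} {g : α → E}

/-- The supremum norm of `g` over `s`, which is `max_s ‖g‖` when `s` is compact and nonempty and `g`
is continuous on `s`. Being a real supremum, it is `0` when `g` is unbounded on `s`. -/
noncomputable def supNormOn (s : Set α) (g : α → E) : ℝ :=
  sSup ((fun x => ‖g x‖) '' s)

lemma supNormOn_nonneg (s : Set α) (g : α → E) : 0 ≤ supNormOn s g :=
  Real.sSup_nonneg (Set.forall_mem_image.2 fun _ _ => norm_nonneg _)

variable [TopologicalSpace α]

lemma norm_le_supNormOn (hs : IsCompact s) (hg : ContinuousOn g s) {x : α} (hx : x ∈ s) :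
    ‖g x‖ ≤ supNormOn s g :=
  le_csSup (hs.bddAbove_image hg.norm) (Set.mem_image_of_mem _ hx)

lemma exists_norm_eq_supNormOn (hs : IsCompact s) (hne : s.Nonempty) (hg : ContinuousOn g s) :
    ∃ x ∈ s, ‖g x‖ = supNormOn s g :=
  let ⟨x, hx, h⟩ := hs.exists_sSup_image_eq hne hg.norm
  ⟨x, hx, h.symm⟩

end SupNorm

variable [NormedSpace ℝ E]

section Taylor

lemma norm_sub_sub_le_of_lipschitz_fderiv {F : Type*} [NormedAddCommGroup F] [NormedSpace ℝ F]
    {f : F → E} {f' : F → F →L[ℝ] E} {s : Set F} {C : ℝ} {x y : F} (hs : Convex ℝ s)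
    (hf : ∀ z ∈ s, HasFDerivWithinAt f (f' z) s z)
    (hx : x ∈ s) (hC : ∀ z ∈ s, ‖f' z - f' x‖ ≤ C * ‖z - x‖) (hy : y ∈ s) :
    ‖f y - f x - f' x (y - x)‖ ≤ C * ‖y - x‖ ^ 2 / 2 := by
  let γ : ℝ → F := AffineMap.lineMap x y
  have hγ : Set.MapsTo γ (Set.Icc 0 1) s := hs.mapsTo_lineMap hx hy
  have hγ_sub (t : ℝ) : γ t - x = t • (y - x) := by simp [γ, AffineMap.lineMap_apply]
  let r : ℝ → E := fun t => f (γ t) - f x - t • f' x (y - x)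
  have hr (t : ℝ) (ht : t ∈ Set.Icc (0 : ℝ) 1) :
      HasDerivWithinAt r ((f' (γ t) - f' x) (y - x)) (Set.Icc 0 1) t := by
    have hfγ := (hf _ (hγ ht)).comp_hasDerivWithinAt t AffineMap.hasDerivWithinAt_lineMap hγ
    have hlin := (hasDerivWithinAt_id t (Set.Icc 0 1)).smul_const (f' x (y - x))
    exact ((hfγ.sub_const (f x)).sub hlin).congr_deriv (by simp)
  have hr' (t : ℝ) (ht : t ∈ Set.Ico (0 : ℝ) 1) :
      ‖(f' (γ t) - f' x) (y - x)‖ ≤ C * ‖y - x‖ ^ 2 * t := by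
    calc ‖(f' (γ t) - f' x) (y - x)‖ ≤ ‖f' (γ t) - f' x‖ * ‖y - x‖ :=
          ContinuousLinearMap.le_opNorm _ _
      _ ≤ C * ‖γ t - x‖ * ‖y - x‖ := by gcongr; exact hC _ (hγ (Set.Ico_subset_Icc_self ht))
      _ = C * ‖y - x‖ ^ 2 * t := by
          rw [hγ_sub, norm_smul, Real.norm_of_nonneg ht.1]; ring
  have hB (t : ℝ) :
      HasDerivAt (fun t => C * ‖y - x‖ ^ 2 * t ^ 2 / 2) (C * ‖y - x‖ ^ 2 * t) t :=
    (((hasDerivAt_pow 2 t).const_mul (C * ‖y - x‖ ^ 2)).div_const 2).congr_deriv (by ring)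
  have hr_le := image_norm_le_of_norm_deriv_right_le_deriv_boundary
    (fun t ht => (hr t ht).continuousWithinAt)
    (fun t ht => (hr t (Set.Ico_subset_Icc_self ht)).mono_of_mem_nhdsWithin
      (Icc_mem_nhdsGE_of_mem ht))
    (by simp [r, γ]) hB hr' (Set.right_mem_Icc.2 zero_le_one)
  simpa [r, γ] using hr_le

lemma norm_sub_sub_smul_derivWithin_le {f : ℝ → E} {s : Set ℝ} {C x y : ℝ} (hs : Convex ℝ s)
    (hf : DifferentiableOn ℝ f s) (hf' : DifferentiableOn ℝ (derivWithin f s) s)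
    (hC : ∀ z ∈ s, ‖derivWithin (derivWithin f s) s z‖ ≤ C) (hx : x ∈ s) (hy : y ∈ s) :
    ‖f y - f x - (y - x) • derivWithin f s x‖ ≤ C * |y - x| ^ 2 / 2 := by
  have hLip (z : ℝ) (hz : z ∈ s) :
      ‖fderivWithin ℝ f s z - fderivWithin ℝ f s x‖ ≤ C * ‖z - x‖ := by
    have hsub : fderivWithin ℝ f s z - fderivWithin ℝ f s x =
        ContinuousLinearMap.toSpanSingleton ℝ (derivWithin f s z - derivWithin f s x) := by
      ext; simp [fderivWithin_derivWithin]
    rw [hsub, ContinuousLinearMap.norm_toSpanSingleton]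
    exact hs.norm_image_sub_le_of_norm_derivWithin_le hf' hC hx hz
  simpa [← toSpanSingleton_derivWithin] using
    norm_sub_sub_le_of_lipschitz_fderiv hs (fun z hz => (hf z hz).hasFDerivWithinAt) hx hLip hy

lemma abs_sub_mul_norm_derivWithin_le {f : ℝ → E} {s : Set ℝ} {B C x y : ℝ} (hs : Convex ℝ s)
    (hf : DifferentiableOn ℝ f s) (hf' : DifferentiableOn ℝ (derivWithin f s) s)
    (hB : ∀ z ∈ s, ‖f z‖ ≤ B) (hC : ∀ z ∈ s, ‖derivWithin (derivWithin f s) s z‖ ≤ C)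
    (hx : x ∈ s) (hy : y ∈ s) :
    |y - x| * ‖derivWithin f s x‖ ≤ 2 * B + C * |y - x| ^ 2 / 2 := by
  calc |y - x| * ‖derivWithin f s x‖
      = ‖f y - f x - (f y - f x - (y - x) • derivWithin f s x)‖ := by
        rw [sub_sub_cancel, norm_smul, Real.norm_eq_abs]
    _ ≤ ‖f y‖ + ‖f x‖ + ‖f y - f x - (y - x) • derivWithin f s x‖ :=
        (norm_sub_le _ _).trans (by gcongr; exact norm_sub_le _ _)
    _ ≤ B + B + C * |y - x| ^ 2 / 2 := by
        gcongr
        · exact hB y hy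
        · exact hB x hx
        · exact norm_sub_sub_smul_derivWithin_le hs hf hf' hC hx hy
    _ = 2 * B + C * |y - x| ^ 2 / 2 := by ring

end Taylor

section Landau

variable {a b : ℝ} {f : ℝ → E}

lemma exists_mem_Icc_abs_sub_eq {x h : ℝ} (hx : x ∈ Set.Icc a b) (h₀ : 0 ≤ h)
    (hh : h ≤ (b - a) / 2) : ∃ y ∈ Set.Icc a b, |y - x| = h := by
  rcases le_total x ((a + b) / 2) with hmid | hmid
  · exact ⟨x + h, ⟨by linarith [hx.1], by linarith⟩, by simp [abs_of_nonneg h₀]⟩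
  · exact ⟨x - h, ⟨by linarith, by linarith [hx.2]⟩, by simp [abs_of_nonneg h₀]⟩

lemma sq_norm_derivWithin_le_or_lt {B C x : ℝ} (hab : a < b)
    (hf : DifferentiableOn ℝ f (Set.Icc a b))
    (hf' : DifferentiableOn ℝ (derivWithin f (Set.Icc a b)) (Set.Icc a b))
    (hB : ∀ z ∈ Set.Icc a b, ‖f z‖ ≤ B)
    (hC : ∀ z ∈ Set.Icc a b, ‖derivWithin (derivWithin f (Set.Icc a b)) (Set.Icc a b) z‖ ≤ C)
    (hx : x ∈ Set.Icc a b) :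
    ‖derivWithin f (Set.Icc a b) x‖ ^ 2 ≤ 4 * B * C ∨
      ‖derivWithin f (Set.Icc a b) x‖ < 8 * B / (b - a) := by
  have hL : 0 < b - a := sub_pos.2 hab
  rcases ((norm_nonneg _).trans (hB x hx)).eq_or_lt with rfl | hB₀
  · have hf₀ : Set.EqOn f (fun _ => 0) (Set.Icc a b) := fun z hz => norm_le_zero_iff.1 (hB z hz)
    simp [derivWithin_congr hf₀ (hf₀ hx)]
  refine or_iff_not_imp_right.2 fun hge => ?_
  set m := ‖derivWithin f (Set.Icc a b) x‖
  replace hge : 8 * B / (b - a) ≤ m := not_lt.1 hge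
  have hm : 0 < m := lt_of_lt_of_le (by positivity) hge
  obtain ⟨y, hy, hyx⟩ : ∃ y ∈ Set.Icc a b, |y - x| = 4 * B / m := by
    refine exists_mem_Icc_abs_sub_eq hx (by positivity) ?_
    rw [div_le_iff₀ hL] at hge
    rw [div_le_iff₀ hm]
    linarith
  have htaylor := abs_sub_mul_norm_derivWithin_le (convex_Icc a b) hf hf' hB hC hx hy
  have hquot : 1 ≤ 4 * B * C / m ^ 2 := by
    rw [hyx, div_mul_cancel₀ _ hm.ne'] at htaylor
    refine le_of_mul_le_mul_left ?_ (mul_pos two_pos hB₀)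
    calc 2 * B * 1 ≤ C * (4 * B / m) ^ 2 / 2 := by linarith
      _ = 2 * B * (4 * B * C / m ^ 2) := by ring
  rwa [one_le_div (by positivity)] at hquot

theorem sq_supNormOn_derivWithin_le_or_lt (hab : a < b) (hf : ContDiffOn ℝ 2 f (Set.Icc a b)) :
    supNormOn (Set.Icc a b) (derivWithin f (Set.Icc a b)) ^ 2 ≤
        4 * supNormOn (Set.Icc a b) f *
          supNormOn (Set.Icc a b) (derivWithin (derivWithin f (Set.Icc a b)) (Set.Icc a b)) ∨
      supNormOn (Set.Icc a b) (derivWithin f (Set.Icc a b)) <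
        8 * supNormOn (Set.Icc a b) f / (b - a) := by
  have hI : UniqueDiffOn ℝ (Set.Icc a b) := uniqueDiffOn_Icc hab
  have hf' : ContDiffOn ℝ 1 (derivWithin f (Set.Icc a b)) (Set.Icc a b) :=
    hf.derivWithin hI (by norm_num)
  obtain ⟨x, hx, hmax⟩ :=
    exists_norm_eq_supNormOn isCompact_Icc (Set.nonempty_Icc.2 hab.le) hf'.continuousOn
  rw [← hmax]
  exact sq_norm_derivWithin_le_or_lt hab
    (hf.differentiableOn two_ne_zero) (hf'.differentiableOn one_ne_zero)
    (fun _ => norm_le_supNormOn isCompact_Icc hf.continuousOn)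
    (fun _ => norm_le_supNormOn isCompact_Icc (hf'.continuousOn_derivWithin hI le_rfl)) hx

end Landau

section HigherOrder

lemma lt_of_sq_le_mul_of_lt_mul {x y z K : ℝ} (hx : 0 < x) (hy : 0 ≤ y) (hxyz : x ^ 2 ≤ y * z)
    (hzx : z < K * x) : x < K * y := by
  have hy_pos : 0 < y := hy.lt_of_ne <| by
    rintro rfl
    exact (pow_pos hx 2).not_ge (by simpa only [zero_mul] using hxyz)
  refine lt_of_mul_lt_mul_right ?_ hx.le
  calc x * x = x ^ 2 := (sq x).symm
    _ ≤ y * z := hxyz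
    _ < y * (K * x) := by gcongr
    _ = K * y * x := by ring

lemma pow_le_of_sq_le_of_pow_le {c x y z P : ℝ} {n : ℕ} (hx : 0 < x) (hy : 0 ≤ y)
    (hxyz : x ^ 2 ≤ c ^ 2 * y * z) (hzx : z ^ (n + 1) ≤ (c ^ n) ^ (n + 1) * P * x ^ n) :
    x ^ (n + 2) ≤ (c ^ (n + 1)) ^ (n + 2) * P * y ^ (n + 1) := by
  refine le_of_mul_le_mul_left ?_ (pow_pos hx n)
  calc x ^ n * x ^ (n + 2) = (x ^ 2) ^ (n + 1) := by ring
    _ ≤ (c ^ 2 * y * z) ^ (n + 1) := by gcongr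
    _ = (c ^ 2 * y) ^ (n + 1) * z ^ (n + 1) := mul_pow _ _ _
    _ ≤ (c ^ 2 * y) ^ (n + 1) * ((c ^ n) ^ (n + 1) * P * x ^ n) := by gcongr
    _ = x ^ n * ((c ^ (n + 1)) ^ (n + 2) * P * y ^ (n + 1)) := by ring

lemma le_mul_rpow_mul_rpow_of_pow_le {c x y P : ℝ} {n : ℕ} (hc : 0 ≤ c) (hy : 0 ≤ y) (hP : 0 ≤ P)
    (h : x ^ (n + 1) ≤ c ^ (n + 1) * P * y ^ n) :
    x ≤ c * P ^ ((1 : ℝ) / (n + 1 : ℕ)) * y ^ (1 - (1 : ℝ) / (n + 1 : ℕ)) := by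
  refine le_of_pow_le_pow_left₀ n.succ_ne_zero (by positivity) (h.trans_eq ?_)
  have hP_pow : (P ^ ((1 : ℝ) / (n + 1 : ℕ))) ^ (n + 1) = P := by
    rw [one_div, rpow_inv_natCast_pow hP n.succ_ne_zero]
  have hy_pow : (y ^ (1 - (1 : ℝ) / (n + 1 : ℕ))) ^ (n + 1) = y ^ n := by
    rw [← rpow_mul_natCast hy, sub_mul, one_div_mul_cancel (by positivity)]
    simp
  rw [mul_pow, mul_pow, hP_pow, hy_pow]

theorem pow_supNormOn_derivWithin_le_or_lt {a b : ℝ} (hab : a < b) (n : ℕ) {f : ℝ → E}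
    (hf : ContDiffOn ℝ (n + 1 : ℕ) f (Set.Icc a b)) :
    supNormOn (Set.Icc a b) (derivWithin f (Set.Icc a b)) ^ (n + 1) ≤
        (2 ^ n) ^ (n + 1) *
          supNormOn (Set.Icc a b) (iteratedDerivWithin (n + 1) f (Set.Icc a b)) *
          supNormOn (Set.Icc a b) f ^ n ∨
      supNormOn (Set.Icc a b) (derivWithin f (Set.Icc a b)) <
        4 ^ (n + 2) / (2 * (b - a)) * supNormOn (Set.Icc a b) f := by
  have hL : 0 < b - a := sub_pos.2 hab
  induction n generalizing f with
  | zero => simp [supNormOn, iteratedDerivWithin_one]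
  | succ n ih =>
    have hf' : ContDiffOn ℝ (n + 1 : ℕ) (derivWithin f (Set.Icc a b)) (Set.Icc a b) :=
      hf.derivWithin (uniqueDiffOn_Icc hab) (by norm_cast)
    have hiter : iteratedDerivWithin (n + 1 + 1) f (Set.Icc a b) =
        iteratedDerivWithin (n + 1) (derivWithin f (Set.Icc a b)) (Set.Icc a b) :=
      funext fun _ => congrFun iteratedDerivWithin_succ' _
    have hlandau := sq_supNormOn_derivWithin_le_or_lt hab (hf.of_le (by norm_cast; lia))
    have hind := ih hf'
    have hP := supNormOn_nonneg (Set.Icc a b)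
      (iteratedDerivWithin (n + 1) (derivWithin f (Set.Icc a b)) (Set.Icc a b))
    have hM₀ := supNormOn_nonneg (Set.Icc a b) f
    have hM₁ := supNormOn_nonneg (Set.Icc a b) (derivWithin f (Set.Icc a b))
    rw [hiter]
    set M₀ := supNormOn (Set.Icc a b) f
    set M₁ := supNormOn (Set.Icc a b) (derivWithin f (Set.Icc a b))
    rcases hM₁.eq_or_lt with hM₁_zero | hM₁_pos
    · left
      rw [← hM₁_zero, zero_pow (by lia)]
      positivity
    rcases hlandau with hsq | hlong
    · rcases hind with hpow | hlt
      · exact .inl (pow_le_of_sq_le_of_pow_le hM₁_pos hM₀ (by norm_num1; exact hsq) hpow)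
      · refine .inr ((lt_of_sq_le_mul_of_lt_mul hM₁_pos (by positivity) hsq hlt).trans_eq ?_)
        ring
    · refine .inr (hlong.trans_le ?_)
      calc 8 * M₀ / (b - a) = 4 ^ 2 / (2 * (b - a)) * M₀ := by field_simp; ring
        _ ≤ 4 ^ (n + 1 + 2) / (2 * (b - a)) * M₀ := by gcongr <;> [norm_num; lia]

end HigherOrder

theorem stmt4_general {a b : ℝ} (hab : a < b) {p : ℕ} (hp : 1 ≤ p) {f : ℝ → E}
    (hf : ContDiffOn ℝ p f (Set.Icc a b)) :
    supNormOn (Set.Icc a b) (derivWithin f (Set.Icc a b)) ≤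
        2 ^ (p - 1) *
          supNormOn (Set.Icc a b) (iteratedDerivWithin p f (Set.Icc a b)) ^ ((1 : ℝ) / p) *
          supNormOn (Set.Icc a b) f ^ (1 - (1 : ℝ) / p) ∨
      supNormOn (Set.Icc a b) (derivWithin f (Set.Icc a b)) <
        4 ^ (p + 1) / (2 * (b - a)) * supNormOn (Set.Icc a b) f := by
  obtain ⟨n, rfl⟩ : ∃ n, p = n + 1 := ⟨p - 1, by lia⟩
  exact (pow_supNormOn_derivWithin_le_or_lt hab n hf).imp_left
    (le_mul_rpow_mul_rpow_of_pow_le (by positivity) (supNormOn_nonneg _ _) (supNormOn_nonneg _ _))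

/-- Lemma 2.3: if `f ∈ Cᵖ([0, 1/(2√λ)])` and `f⁽ᵖ⁾` is not identically
zero, then `max |f′| ≤ 2^{p−1} (max |f⁽ᵖ⁾|)^{1/p} (max |f|)^{1−1/p}` or
`max |f′| < 4^{p+1} λ^{1/2} max |f|`, the maxima being over `[0, 1/(2√λ)]`. -/
theorem stmt4 (lam : ℝ) (hlam : 0 < lam) (p : ℕ) (hp : 1 ≤ p) (f : ℝ → ℝ)
    (hf : ContDiffOn ℝ (p : ℕ∞) f (Set.Icc 0 (1 / (2 * Real.sqrt lam))))
    (hfp : ∃ x ∈ Set.Icc (0 : ℝ) (1 / (2 * Real.sqrt lam)),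
      iteratedDerivWithin p f (Set.Icc 0 (1 / (2 * Real.sqrt lam))) x ≠ 0) :
    sSup ((fun x => |derivWithin f (Set.Icc 0 (1 / (2 * Real.sqrt lam))) x|) ''
        Set.Icc (0 : ℝ) (1 / (2 * Real.sqrt lam))) ≤
      2 ^ (p - 1) *
        (sSup ((fun x => |iteratedDerivWithin p f (Set.Icc 0 (1 / (2 * Real.sqrt lam))) x|) ''
          Set.Icc (0 : ℝ) (1 / (2 * Real.sqrt lam)))) ^ ((1 : ℝ) / p) *
        (sSup ((fun x => |f x|) '' Set.Icc (0 : ℝ) (1 / (2 * Real.sqrt lam)))) ^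
          (1 - (1 : ℝ) / p) ∨
    sSup ((fun x => |derivWithin f (Set.Icc 0 (1 / (2 * Real.sqrt lam))) x|) ''
        Set.Icc (0 : ℝ) (1 / (2 * Real.sqrt lam))) <
      4 ^ (p + 1) * Real.sqrt lam *
        sSup ((fun x => |f x|) '' Set.Icc (0 : ℝ) (1 / (2 * Real.sqrt lam))) := by
  have hlength : 4 ^ (p + 1) / (2 * (1 / (2 * √lam) - 0)) = 4 ^ (p + 1) * √lam := by
    rw [sub_zero]
    field_simp
  exact hlength ▸ stmt4_general (by positivity) hp hf
end

section
/- Let p ≥ 1 be an integer and let m₀, m₁, …, m_p be positive real numbers satisfying m_{q+1}² ≤ 4 m_q m_{q+2} for every integer q with 0 ≤ q ≤ p−2. Then m₁ ≤ 2^{p−1} m_p^{1/p} m₀^{1−1/p}; equivalently, m_p / m₀ ≥ 4^{−p(p−1)/2} (m₁/m₀)^p. -/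
/-!
With `c = 2`, the hypothesis `m_{q+1}² ≤ c² m_q m_{q+2}` says that `r_q = m_{q+1} / m_q` satisfies
`r_q ≤ c² r_{q+1}`, so that `r_0 ≤ (c²)^q r_q`. Multiplying these bounds over `q < p`, the product
of the ratios telescopes to `m_p / m_0` and the powers of `c²` add up to `(c²)^(p(p-1)/2)`, which is
the second inequality. The first is its `p`-th root.
-/

section OrderedField

variable {K : Type*} [Field K] [LinearOrder K] [IsStrictOrderedRing K] {C : K} {m : ℕ → K} {p q : ℕ}

lemma succ_div_le_mul_succ_div_of_sq_le (hq : 0 < m q) (hq' : 0 < m (q + 1))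
    (h : m (q + 1) ^ 2 ≤ C * m q * m (q + 2)) :
    m (q + 1) / m q ≤ C * (m (q + 2) / m (q + 1)) := by
  rw [← mul_div_assoc, div_le_div_iff₀ hq hq']
  linarith

lemma div_le_pow_mul_succ_div (hC : 0 ≤ C) (hpos : ∀ q, q ≤ p → 0 < m q)
    (hlog : ∀ q, q + 2 ≤ p → m (q + 1) ^ 2 ≤ C * m q * m (q + 2)) (hq : q + 1 ≤ p) :
    m 1 / m 0 ≤ C ^ q * (m (q + 1) / m q) := by
  induction q with
  | zero => simp
  | succ q ih =>
    calc m 1 / m 0 ≤ C ^ q * (m (q + 1) / m q) := ih (by lia)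
      _ ≤ C ^ q * (C * (m (q + 2) / m (q + 1))) := by
        gcongr
        exact succ_div_le_mul_succ_div_of_sq_le (hpos q (by lia)) (hpos (q + 1) (by lia))
          (hlog q hq)
      _ = C ^ (q + 1) * (m (q + 2) / m (q + 1)) := by ring

lemma div_pow_le_pow_choose_two_mul_div (hC : 0 ≤ C) (hpos : ∀ q, q ≤ p → 0 < m q)
    (hlog : ∀ q, q + 2 ≤ p → m (q + 1) ^ 2 ≤ C * m q * m (q + 2)) (hq : q ≤ p) :
    (m 1 / m 0) ^ q ≤ C ^ q.choose 2 * (m q / m 0) := by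
  have h0 : 0 < m 0 := hpos 0 (by lia)
  induction q with
  | zero => simp [h0.ne']
  | succ q ih =>
    have hmq : 0 < m q := hpos q (by lia)
    have h1 : 0 < m 1 := hpos 1 (by lia)
    have hchoose : (q + 1).choose 2 = q.choose 2 + q := by
      rw [Nat.choose_succ_succ', Nat.choose_one_right, add_comm]
    calc (m 1 / m 0) ^ (q + 1) = (m 1 / m 0) ^ q * (m 1 / m 0) := pow_succ _ _
      _ ≤ C ^ q.choose 2 * (m q / m 0) * (C ^ q * (m (q + 1) / m q)) := by
        gcongr
        · exact ih (by lia)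
        · exact div_le_pow_mul_succ_div hC hpos hlog hq
      _ = C ^ (q + 1).choose 2 * (m (q + 1) / m 0) := by
        rw [hchoose, pow_add]
        field_simp

end OrderedField

lemma sq_pow_choose_two {M : Type*} [Monoid M] (c : M) (n : ℕ) :
    (c ^ 2) ^ n.choose 2 = (c ^ (n - 1)) ^ n := by
  rw [← pow_mul, ← pow_mul, Nat.choose_two_right, mul_comm (n - 1),
    Nat.two_mul_div_two_of_even (Nat.even_mul_pred_self n)]

lemma rpow_neg_mul_sub_one_div_two {C : ℝ} (hC : 0 ≤ C) (n : ℕ) :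
    C ^ (-((n : ℝ) * (n - 1) / 2)) = (C ^ n.choose 2)⁻¹ := by
  rw [← Nat.cast_choose_two, Real.rpow_neg hC, Real.rpow_natCast]

lemma div_pow_le_pow_mul_div_iff {a b d k : ℝ} {n : ℕ} (hn : n ≠ 0) (ha : 0 ≤ a) (hb : 0 < b)
    (hd : 0 ≤ d) (hk : 0 ≤ k) :
    (a / b) ^ n ≤ k ^ n * (d / b) ↔ a ≤ k * d ^ ((1 : ℝ) / n) * b ^ (1 - (1 : ℝ) / n) := by
  have hroot : (k * (d / b) ^ ((1 : ℝ) / n)) ^ n = k ^ n * (d / b) := by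
    rw [mul_pow, one_div, Real.rpow_inv_natCast_pow (by positivity) hn]
  have hfactor : k * d ^ ((1 : ℝ) / n) * b ^ (1 - (1 : ℝ) / n) =
      k * (d / b) ^ ((1 : ℝ) / n) * b := by
    rw [Real.rpow_sub hb, Real.rpow_one, Real.div_rpow hd hb.le]
    ring
  rw [← hroot, pow_le_pow_iff_left₀ (by positivity) (by positivity) hn, div_le_iff₀ hb, hfactor]

theorem stmt7_general {c : ℝ} (hc : 0 < c) (p : ℕ) (hp : 1 ≤ p) (m : ℕ → ℝ)
    (hpos : ∀ q, q ≤ p → 0 < m q)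
    (hlog : ∀ q : ℕ, q + 2 ≤ p → (m (q + 1)) ^ 2 ≤ c ^ 2 * m q * m (q + 2)) :
    m 1 ≤ c ^ (p - 1) * (m p) ^ ((1 : ℝ) / p) * (m 0) ^ (1 - (1 : ℝ) / p) ∧
      m p / m 0 ≥ (c ^ 2) ^ (-((p : ℝ) * ((p : ℝ) - 1) / 2)) * (m 1 / m 0) ^ p := by
  have hratio : (m 1 / m 0) ^ p ≤ (c ^ 2) ^ p.choose 2 * (m p / m 0) :=
    div_pow_le_pow_choose_two_mul_div (sq_nonneg c) hpos hlog le_rfl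
  constructor
  · rw [← div_pow_le_pow_mul_div_iff (by lia) (hpos 1 hp).le (hpos 0 (by lia)) (hpos p le_rfl).le
      (by positivity), ← sq_pow_choose_two]
    exact hratio
  · rw [ge_iff_le, rpow_neg_mul_sub_one_div_two (sq_nonneg c), inv_mul_le_iff₀ (by positivity)]
    exact hratio

/-- if `m₀, …, m_p` are positive reals with `m_{q+1}² ≤ 4 m_q m_{q+2}`
for all `0 ≤ q ≤ p−2`, then `m₁ ≤ 2^{p−1} m_p^{1/p} m₀^{1−1/p}`; equivalently,
`m_p/m₀ ≥ 4^{−p(p−1)/2} (m₁/m₀)^p`. -/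
theorem stmt7 (p : ℕ) (hp : 1 ≤ p) (m : ℕ → ℝ) (hpos : ∀ q, q ≤ p → 0 < m q)
    (hlog : ∀ q : ℕ, q + 2 ≤ p → (m (q + 1)) ^ 2 ≤ 4 * m q * m (q + 2)) :
    m 1 ≤ 2 ^ (p - 1) * (m p) ^ ((1 : ℝ) / p) * (m 0) ^ (1 - (1 : ℝ) / p) ∧
      m p / m 0 ≥ (4 : ℝ) ^ (-((p : ℝ) * ((p : ℝ) - 1) / 2)) * (m 1 / m 0) ^ p := by
  rw [show (4 : ℝ) = 2 ^ 2 by norm_num] at hlog ⊢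
  exact stmt7_general two_pos p hp m hpos hlog
end

section
/- Let p be a positive integer and 0 ≤ q ≤ p−1 an integer, and define v_{q,p}: ℝ → ℝ by v_{q,p}(t) = 1 for 0 ≤ t ≤ (2p−q)/(2p), v_{q,p}(t) = g(2pt − 2p + q) for (2p−q)/(2p) ≤ t ≤ (2p−q+1)/(2p), v_{q,p}(t) = 0 for t > (2p−q+1)/(2p), and v_{q,p}(−t) = v_{q,p}(t) for t < 0, where g(x) = 1 − 6x⁴ + 8x⁶ − 3x⁸. Then v_{q,p} is twice continuously differentiable on ℝ and satisfies |v_{q,p}(t)| ≤ 1, |v_{q,p}′(t)| < 5p, and |v_{q,p}″(t)| < 44p² for all t ∈ ℝ. -/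
/-- The polynomial `g(x) = 1 − 6x⁴ + 8x⁶ − 3x⁸`. -/
noncomputable def gPoly (x : ℝ) : ℝ := 1 - 6 * x ^ 4 + 8 * x ^ 6 - 3 * x ^ 8

/-- The even cutoff function `v_{q,p}` of the paper: `v_{q,p}(t) = 1` for
`0 ≤ t ≤ (2p−q)/(2p)`, `v_{q,p}(t) = g(2pt − 2p + q)` for
`(2p−q)/(2p) ≤ t ≤ (2p−q+1)/(2p)`, `v_{q,p}(t) = 0` for `t > (2p−q+1)/(2p)`,
extended evenly to `t < 0`. -/
noncomputable def vCut (q p : ℕ) (t : ℝ) : ℝ :=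
  if |t| ≤ (2 * (p : ℝ) - q) / (2 * p) then 1
  else if |t| ≤ (2 * (p : ℝ) - q + 1) / (2 * p) then
    gPoly (2 * p * |t| - 2 * p + q)
  else 0

/-!
The profile `g` is flat to second order at both ends of `[0, 1]`, so freezing it outside `[0, 1]`
gives a `C²` function `gRamp`, and `v_{q,p}(t) = gRamp (2p|t| - (2p - q))`. When `q ≤ 2p` the
function `f(x) = gRamp (2px - (2p - q))` is constant on `(-∞, 0]`, hence
`f(|t|) = f(t) + f(-t) - f(0)` inherits the smoothness of `f`; when `q > 2p` the cutoff vanishes.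
The derivative bounds reduce to `|g'| < 5/2` and `|g''| < 11` on `[0, 1]`, scaled by `2p` and `4p²`.
-/

open Set

section ProjIcc

variable {E : Type*} [NormedAddCommGroup E] [NormedSpace ℝ E] {a b : ℝ} {f f' : ℝ → E}

theorem hasDerivAt_comp_projIcc (hab : a ≤ b)
    (hf : ∀ x ∈ Icc a b, HasDerivWithinAt f (f' x) (Icc a b) x)
    (ha : f' a = 0) (hb : f' b = 0) (x : ℝ) :
    HasDerivAt (fun y => f (projIcc a b hab y)) (f' (projIcc a b hab x)) x := by
  set F : ℝ → E := fun y => f (projIcc a b hab y)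
  set d : E := f' (projIcc a b hab x) with hd
  have left_piece : HasDerivWithinAt F d (Iic a) x := by
    by_cases hx : x ∈ Iic a
    · rw [hd, projIcc_of_le_left hab hx, ha]
      exact (hasDerivWithinAt_const x _ (f a)).congr_of_mem
        (fun y hy => by simp only [F, projIcc_of_le_left hab hy]) hx
    · exact HasFDerivWithinAt.of_notMem_closure (by rwa [isClosed_Iic.closure_eq])
  have middle_piece : HasDerivWithinAt F d (Icc a b) x := by
    by_cases hx : x ∈ Icc a b
    · rw [hd, projIcc_of_mem hab hx]
      exact (hf x hx).congr_of_mem (fun y hy => by simp only [F, projIcc_of_mem hab hy]) hx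
    · exact HasFDerivWithinAt.of_notMem_closure (by rwa [isClosed_Icc.closure_eq])
  have right_piece : HasDerivWithinAt F d (Ici b) x := by
    by_cases hx : x ∈ Ici b
    · rw [hd, projIcc_of_right_le hab hx, hb]
      exact (hasDerivWithinAt_const x _ (f b)).congr_of_mem
        (fun y hy => by simp only [F, projIcc_of_right_le hab hy]) hx
    · exact HasFDerivWithinAt.of_notMem_closure (by rwa [isClosed_Ici.closure_eq])
  have pieces_cover : Iic a ∪ Icc a b ∪ Ici b = univ := by
    rw [Iic_union_Icc_eq_Iic hab, Iic_union_Ici]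
  rw [← hasDerivWithinAt_univ, ← pieces_cover]
  exact (left_piece.union middle_piece).union right_piece

theorem deriv_comp_projIcc (hab : a ≤ b) (hf : Differentiable ℝ f)
    (ha : deriv f a = 0) (hb : deriv f b = 0) :
    deriv (fun x => f (projIcc a b hab x)) = fun x => deriv f (projIcc a b hab x) :=
  funext fun x => (hasDerivAt_comp_projIcc hab
    (fun y _ => (hf y).hasDerivAt.hasDerivWithinAt) ha hb x).deriv

theorem contDiff_comp_projIcc (hab : a ≤ b) {n : ℕ} (hf : ContDiff ℝ n f)
    (ha : ∀ k ∈ Icc 1 n, iteratedDeriv k f a = 0)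
    (hb : ∀ k ∈ Icc 1 n, iteratedDeriv k f b = 0) :
    ContDiff ℝ n fun x => f (projIcc a b hab x) := by
  induction n generalizing f with
  | zero =>
    rw [Nat.cast_zero, contDiff_zero] at hf ⊢
    exact hf.comp (continuous_subtype_val.comp continuous_projIcc)
  | succ n ih =>
    have hdiff : Differentiable ℝ f := hf.differentiable (by simp)
    have ha₁ : deriv f a = 0 := by simpa using ha 1 (by simp)
    have hb₁ : deriv f b = 0 := by simpa using hb 1 (by simp)
    rw [Nat.cast_add, Nat.cast_one, contDiff_succ_iff_deriv] at hf ⊢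
    refine ⟨fun x => (hasDerivAt_comp_projIcc hab
      (fun y _ => (hdiff y).hasDerivAt.hasDerivWithinAt) ha₁ hb₁ x).differentiableAt, by simp, ?_⟩
    rw [deriv_comp_projIcc hab hdiff ha₁ hb₁]
    refine ih hf.2.2 (fun k hk => ?_) fun k hk => ?_
    · simpa only [iteratedDeriv_succ'] using ha (k + 1) ⟨by simp, by grind⟩
    · simpa only [iteratedDeriv_succ'] using hb (k + 1) ⟨by simp, by grind⟩

end ProjIcc

section CompAbs

theorem comp_abs_eq_of_const_nonpos {α G : Type*} [AddCommGroup α] [LinearOrder α]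
    [IsOrderedAddMonoid α] [AddCommGroup G] {f : α → G} (hconst : ∀ x ≤ 0, f x = f 0) (t : α) :
    f |t| = f t + f (-t) - f 0 := by
  rcases le_total 0 t with ht | ht
  · rw [abs_of_nonneg ht, hconst (-t) (neg_nonpos.2 ht), add_sub_cancel_right]
  · rw [abs_of_nonpos ht, hconst t ht, add_sub_cancel_left]

variable {E : Type*} [NormedAddCommGroup E] [NormedSpace ℝ E] {f : ℝ → E}

theorem contDiff_comp_abs_of_const_nonpos {n : WithTop ℕ∞} (hf : ContDiff ℝ n f)
    (hconst : ∀ x ≤ 0, f x = f 0) : ContDiff ℝ n fun t => f |t| := by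
  simp only [comp_abs_eq_of_const_nonpos hconst]
  fun_prop

theorem deriv_eq_zero_of_const_nonpos (hf : Differentiable ℝ f) (hconst : ∀ x ≤ 0, f x = f 0)
    {x : ℝ} (hx : x ≤ 0) : deriv f x = 0 := by
  rw [← (hf x).derivWithin (uniqueDiffOn_Iic 0 x hx),
    derivWithin_congr (s := Iic 0) (f := fun _ => f 0) hconst (hconst x hx),
    derivWithin_fun_const, Pi.zero_apply]

theorem deriv_comp_abs_of_const_nonpos (hf : Differentiable ℝ f) (hconst : ∀ x ≤ 0, f x = f 0)
    (t : ℝ) : deriv (fun s => f |s|) t = deriv f t - deriv f (-t) := by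
  simp only [comp_abs_eq_of_const_nonpos hconst]
  rw [deriv_sub_const, deriv_fun_add (hf t) (by fun_prop), deriv_comp_neg, sub_eq_add_neg]

theorem norm_deriv_comp_abs_of_const_nonpos (hf : Differentiable ℝ f)
    (hconst : ∀ x ≤ 0, f x = f 0) (t : ℝ) :
    ‖deriv (fun s => f |s|) t‖ = ‖deriv f |t|‖ := by
  have hzero {x : ℝ} (hx : x ≤ 0) : deriv f x = 0 := deriv_eq_zero_of_const_nonpos hf hconst hx
  rw [deriv_comp_abs_of_const_nonpos hf hconst]
  rcases le_total 0 t with ht | ht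
  · rw [hzero (neg_nonpos.2 ht), sub_zero, abs_of_nonneg ht]
  · rw [hzero ht, zero_sub, norm_neg, abs_of_nonpos ht]

theorem deriv_deriv_comp_abs_of_const_nonpos (hf : Differentiable ℝ f)
    (hf' : Differentiable ℝ (deriv f)) (hconst : ∀ x ≤ 0, f x = f 0) (t : ℝ) :
    deriv (deriv fun s => f |s|) t = deriv (deriv f) |t| := by
  have hzero {x : ℝ} (hx : x ≤ 0) : deriv f x = 0 := deriv_eq_zero_of_const_nonpos hf hconst hx
  have hconst' : ∀ x ≤ 0, deriv f x = deriv f 0 := fun _ hx =>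
    (hzero hx).trans (hzero le_rfl).symm
  have hzero' {x : ℝ} (hx : x ≤ 0) : deriv (deriv f) x = 0 :=
    deriv_eq_zero_of_const_nonpos hf' hconst' hx
  have hconst'' : ∀ x ≤ 0, deriv (deriv f) x = deriv (deriv f) 0 := fun _ hx =>
    (hzero' hx).trans (hzero' le_rfl).symm
  rw [funext (deriv_comp_abs_of_const_nonpos hf hconst), deriv_fun_sub (hf' t) (by fun_prop),
    deriv_comp_neg, sub_neg_eq_add, comp_abs_eq_of_const_nonpos hconst'', hzero' le_rfl, sub_zero]

end CompAbs

theorem deriv_comp_mul_sub {𝕜 E : Type*} [NontriviallyNormedField 𝕜] [NormedAddCommGroup E]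
    [NormedSpace 𝕜 E] (f : 𝕜 → E) (r c x : 𝕜) :
    deriv (fun y => f (r * y - c)) x = r • deriv f (r * x - c) := by
  rw [deriv_comp_mul_left r (fun y => f (y - c)), deriv_comp_sub_const]

section Profile

theorem gPoly_mem_Icc {x : ℝ} (hx : x ∈ Icc 0 1) : gPoly x ∈ Icc 0 1 := by
  have hz : 0 ≤ 1 - x ^ 2 := sub_nonneg.2 (pow_le_one₀ hx.1 hx.2)
  constructor
  · calc 0 ≤ (1 - x ^ 2) ^ 3 * (1 + 3 * x ^ 2) := by positivity
      _ = gPoly x := by unfold gPoly; ring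
  · calc gPoly x = 1 - x ^ 4 * (3 * (1 - x ^ 2) ^ 2 + 2 * (1 - x ^ 2) + 1) := by
          unfold gPoly; ring
      _ ≤ 1 := sub_le_self _ (by positivity)

theorem contDiff_gPoly {n : WithTop ℕ∞} : ContDiff ℝ n gPoly := by
  unfold gPoly
  fun_prop

theorem deriv_gPoly : deriv gPoly = fun x => -(24 * (x ^ 3 * (1 - x ^ 2) ^ 2)) := by
  funext x
  have h : HasDerivAt gPoly _ x :=
    ((((hasDerivAt_pow 4 x).const_mul 6).const_sub 1).add
      ((hasDerivAt_pow 6 x).const_mul 8)).sub ((hasDerivAt_pow 8 x).const_mul 3)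
  exact (h.congr_deriv (by ring)).deriv

theorem deriv_deriv_gPoly :
    deriv (deriv gPoly) = fun x => 24 * (x ^ 2 * (1 - x ^ 2) * (7 * x ^ 2 - 3)) := by
  funext x
  have h : HasDerivAt (fun x : ℝ => -(24 * (x ^ 3 * (1 - x ^ 2) ^ 2))) _ x :=
    (((hasDerivAt_pow 3 x).mul (((hasDerivAt_pow 2 x).const_sub 1).pow 2)).const_mul 24).neg
  rw [deriv_gPoly]
  exact (h.congr_deriv (by simp only [Pi.pow_apply]; ring)).deriv

theorem abs_deriv_gPoly_lt {x : ℝ} (hx : x ∈ Icc 0 1) : |deriv gPoly x| < 5 / 2 := by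
  have hz : 0 ≤ 1 - x ^ 2 := sub_nonneg.2 (pow_le_one₀ hx.1 hx.2)
  have hx₀ : 0 ≤ x := hx.1
  have hquartic : x ^ 2 * (1 - x ^ 2) ≤ 1 / 4 := by
    linarith [sq_nonneg (x ^ 2 - 1 / 2)]
  have hcubic : x * (1 - x ^ 2) ≤ 2 / 5 := by
    -- `4 / 7` approximates the maximiser `1 / √3` of `x (1 - x²)`.
    have : 0 ≤ (x - 4 / 7) ^ 2 * (x + 8 / 7) := by positivity
    linarith [hx.2]
  have hprod : x ^ 3 * (1 - x ^ 2) ^ 2 ≤ 1 / 10 :=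
    calc x ^ 3 * (1 - x ^ 2) ^ 2 = x ^ 2 * (1 - x ^ 2) * (x * (1 - x ^ 2)) := by ring
      _ ≤ 1 / 4 * (2 / 5) := by gcongr
      _ = 1 / 10 := by norm_num
  rw [deriv_gPoly, abs_neg, abs_of_nonneg (by positivity)]
  linarith

theorem abs_deriv_deriv_gPoly_lt {x : ℝ} (hx : x ∈ Icc 0 1) :
    |deriv (deriv gPoly) x| < 11 := by
  have hy₀ : 0 ≤ x ^ 2 := sq_nonneg x
  have hy₁ : x ^ 2 ≤ 1 := pow_le_one₀ hx.1 hx.2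
  have hcubic {y : ℝ} (h₀ : 0 ≤ y) (h₁ : y ≤ 1) : |y * (1 - y) * (7 * y - 3)| < 11 / 24 := by
    rw [abs_lt]
    constructor
    · have : y * (3 - 7 * y) ≤ 9 / 28 := by linarith [sq_nonneg (y - 3 / 14)]
      linarith [mul_le_mul_of_nonneg_right this (sub_nonneg.2 h₁)]
    · -- `23 / 30` approximates the maximiser `(10 + √37) / 21` of the cubic on `[0, 1]`.
      nlinarith [mul_nonneg h₀ (sq_nonneg (y - 23 / 30)), sq_nonneg (y - 23 / 30)]
  rw [deriv_deriv_gPoly, abs_mul, abs_of_pos (by norm_num)]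
  linarith [hcubic hy₀ hy₁]

end Profile

section Ramp

/-- The profile `gPoly` frozen outside `[0, 1]`: the transition from `1` on `(-∞, 0]` to `0` on
`[1, ∞)` of which `vCut` is a rescaled even reflection. -/
noncomputable def gRamp (x : ℝ) : ℝ := gPoly (projIcc 0 1 zero_le_one x)

theorem gRamp_of_nonpos {x : ℝ} (hx : x ≤ 0) : gRamp x = 1 := by
  simp [gRamp, projIcc_of_le_left _ hx, gPoly]

theorem gRamp_of_mem {x : ℝ} (hx : x ∈ Icc 0 1) : gRamp x = gPoly x := by
  rw [gRamp, projIcc_of_mem _ hx]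

theorem gRamp_of_one_le {x : ℝ} (hx : 1 ≤ x) : gRamp x = 0 := by
  rw [gRamp, projIcc_of_right_le _ hx]
  norm_num [gPoly]

theorem abs_gRamp_le_one (x : ℝ) : |gRamp x| ≤ 1 := by
  have h := gPoly_mem_Icc (projIcc 0 1 zero_le_one x).2
  exact (abs_of_nonneg h.1).trans_le h.2

theorem contDiff_gRamp : ContDiff ℝ 2 gRamp := by
  refine contDiff_comp_projIcc (n := 2) zero_le_one contDiff_gPoly ?_ ?_ <;>
  · rintro k ⟨hk₁, hk₂⟩
    interval_cases k
    · simp [deriv_gPoly]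
    · simp [iteratedDeriv_succ, deriv_deriv_gPoly]

theorem deriv_gRamp : deriv gRamp = fun x => deriv gPoly (projIcc 0 1 zero_le_one x) :=
  deriv_comp_projIcc zero_le_one (contDiff_gPoly.differentiable one_ne_zero)
    (by simp [deriv_gPoly]) (by simp [deriv_gPoly])

theorem deriv_deriv_gRamp :
    deriv (deriv gRamp) = fun x => deriv (deriv gPoly) (projIcc 0 1 zero_le_one x) := by
  rw [deriv_gRamp]
  exact deriv_comp_projIcc zero_le_one (contDiff_gPoly.differentiable_deriv_two)
    (by simp [deriv_deriv_gPoly]) (by simp [deriv_deriv_gPoly])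

theorem abs_deriv_gRamp_lt (x : ℝ) : |deriv gRamp x| < 5 / 2 := by
  rw [deriv_gRamp]
  exact abs_deriv_gPoly_lt (projIcc 0 1 zero_le_one x).2

theorem abs_deriv_deriv_gRamp_lt (x : ℝ) : |deriv (deriv gRamp) x| < 11 := by
  rw [deriv_deriv_gRamp]
  exact abs_deriv_deriv_gPoly_lt (projIcc 0 1 zero_le_one x).2

end Ramp

section Cutoff

variable {p q : ℕ}

/-- The restriction of `vCut q p` to `[0, ∞)`, continued to the negative half-line by the same
ramp instead of by reflection. -/
noncomputable def halfCut (q p : ℕ) (x : ℝ) : ℝ := gRamp (2 * p * x - (2 * p - q))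

theorem vCut_eq_halfCut_abs (hp : 1 ≤ p) : vCut q p = fun t => halfCut q p |t| := by
  funext t
  have hp₀ : (0 : ℝ) < 2 * p := by positivity
  unfold vCut halfCut
  simp only [le_div_iff₀' hp₀]
  split_ifs with hplateau hramp
  · rw [gRamp_of_nonpos (by linarith)]
  · rw [gRamp_of_mem ⟨by linarith, by linarith⟩, sub_add]
  · rw [gRamp_of_one_le (by linarith)]

theorem vCut_eq_zero_of_lt (hp : 1 ≤ p) (hq : 2 * p < q) : vCut q p = 0 := by
  funext t
  have hq' : (2 * p + 1 : ℝ) ≤ q := by exact_mod_cast hq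
  have ht : 0 ≤ 2 * p * |t| := by positivity
  simp only [vCut_eq_halfCut_abs hp, halfCut, Pi.zero_apply]
  exact gRamp_of_one_le (by linarith)

theorem halfCut_const_nonpos (hq : q ≤ 2 * p) : ∀ x ≤ 0, halfCut q p x = halfCut q p 0 := by
  intro x hx
  have hq' : (q : ℝ) ≤ 2 * p := by exact_mod_cast hq
  have hpx : 2 * p * x ≤ 0 := mul_nonpos_of_nonneg_of_nonpos (by positivity) hx
  rw [halfCut, halfCut, gRamp_of_nonpos (by linarith), gRamp_of_nonpos (by linarith)]

theorem contDiff_halfCut : ContDiff ℝ 2 (halfCut q p) :=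
  contDiff_gRamp.comp (by fun_prop)

theorem deriv_halfCut :
    deriv (halfCut q p) = fun x => 2 * p * deriv gRamp (2 * p * x - (2 * p - q)) :=
  funext (deriv_comp_mul_sub gRamp _ _)

theorem deriv_deriv_halfCut (x : ℝ) :
    deriv (deriv (halfCut q p)) x =
      (2 * p) ^ 2 * deriv (deriv gRamp) (2 * p * x - (2 * p - q)) := by
  rw [deriv_halfCut, deriv_const_mul_field, deriv_comp_mul_sub, smul_eq_mul]
  ring

theorem abs_deriv_halfCut_lt (hp : 1 ≤ p) (x : ℝ) : |deriv (halfCut q p) x| < 5 * p := by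
  have hp₀ : (0 : ℝ) < 2 * p := by positivity
  rw [deriv_halfCut, abs_mul, abs_of_pos hp₀]
  linarith [mul_lt_mul_of_pos_left (abs_deriv_gRamp_lt (2 * p * x - (2 * p - q))) hp₀]

theorem abs_deriv_deriv_halfCut_lt (hp : 1 ≤ p) (x : ℝ) :
    |deriv (deriv (halfCut q p)) x| < 44 * (p : ℝ) ^ 2 := by
  have hp₀ : (0 : ℝ) < (2 * p) ^ 2 := by positivity
  rw [deriv_deriv_halfCut, abs_mul, abs_of_pos hp₀]
  linarith [mul_lt_mul_of_pos_left (abs_deriv_deriv_gRamp_lt (2 * p * x - (2 * p - q))) hp₀]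

end Cutoff

theorem stmt9_general (p q : ℕ) (hp : 1 ≤ p) :
    ContDiff ℝ 2 (vCut q p) ∧
      ∀ t : ℝ, |vCut q p t| ≤ 1 ∧ |deriv (vCut q p) t| < 5 * p ∧
        |deriv (deriv (vCut q p)) t| < 44 * (p : ℝ) ^ 2 := by
  rcases le_or_gt q (2 * p) with hq | hq
  · have hsmooth : ContDiff ℝ 2 (halfCut q p) := contDiff_halfCut
    have hdiff : Differentiable ℝ (halfCut q p) := hsmooth.differentiable two_ne_zero
    have hconst := halfCut_const_nonpos hq
    rw [vCut_eq_halfCut_abs hp]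
    refine ⟨contDiff_comp_abs_of_const_nonpos hsmooth hconst,
      fun t => ⟨abs_gRamp_le_one _, ?_, ?_⟩⟩
    · rw [← Real.norm_eq_abs, norm_deriv_comp_abs_of_const_nonpos hdiff hconst]
      exact abs_deriv_halfCut_lt hp |t|
    · rw [deriv_deriv_comp_abs_of_const_nonpos hdiff hsmooth.differentiable_deriv_two hconst]
      exact abs_deriv_deriv_halfCut_lt hp |t|
  · have hp₀ : (0 : ℝ) < p := by positivity
    rw [vCut_eq_zero_of_lt hp hq]
    exact ⟨contDiff_const, fun t => ⟨by simp, by simpa using hp₀, by simpa using pow_pos hp₀ 2⟩⟩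

/-- `v_{q,p}` is `C²` on `ℝ` and satisfies `|v_{q,p}| ≤ 1`,
`|v_{q,p}′| < 5p` and `|v_{q,p}″| < 44p²` everywhere. -/
theorem stmt9 (p q : ℕ) (hp : 1 ≤ p) (hq : q ≤ p - 1) :
    ContDiff ℝ 2 (vCut q p) ∧
      ∀ t : ℝ, |vCut q p t| ≤ 1 ∧ |deriv (vCut q p) t| < 5 * p ∧
        |deriv (deriv (vCut q p)) t| < 44 * (p : ℝ) ^ 2 :=
  stmt9_general p q hp
end

section
/- Let n ≥ 2 and p ≥ 1 be integers and define the sequence D_q by D₀ = 1, D₁ = 3(1 + 44²n²p⁴ + 4·5²np²), and D_q = 3(1 + 44²n²p⁴) D_{q−2} + 12·5²np² · D_{q−1} for q ≥ 2. Then D_p < 2^{(2n+18)p²}. -/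
/-!
A solution of `u (q + 2) = a * u q + b * u (q + 1)` with `a, b ≥ 0`, `a + b ≥ 1`, `u 0 ≤ 1` and
`u 1 ≤ a + b` satisfies `u q ≤ (a + b) ^ q`. For the sequence `D`, the sum `a + b` is a quadratic
polynomial in `n * p ^ 2`, which is at most `2 ^ (n + 2 * p)`; hence
`a + b < 2 ^ (13 + 2 * (n + 2 * p))`, and for `p ≥ 1` this exponent is at most `(2 * n + 18) * p`.
-/

theorem le_add_pow_of_le_mul_add_mul {R : Type*} [Semiring R] [PartialOrder R] [IsOrderedRing R]
    {a b : R} (ha : 0 ≤ a) (hb : 0 ≤ b) (hab : 1 ≤ a + b) {u : ℕ → R}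
    (h0 : u 0 ≤ 1) (h1 : u 1 ≤ a + b)
    (hrec : ∀ q, u (q + 2) ≤ a * u q + b * u (q + 1)) (q : ℕ) :
    u q ≤ (a + b) ^ q := by
  induction q using Nat.twoStepInduction with
  | zero => simpa only [pow_zero] using h0
  | one => simpa only [pow_one] using h1
  | more q ih ih' =>
    have ih_weak : u q ≤ (a + b) ^ (q + 1) := ih.trans (pow_le_pow_right₀ hab q.le_succ)
    calc u (q + 2) ≤ a * u q + b * u (q + 1) := hrec q
      _ ≤ a * (a + b) ^ (q + 1) + b * (a + b) ^ (q + 1) := by gcongr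
      _ = (a + b) ^ (q + 2) := by rw [← add_mul, ← pow_succ']

theorem mul_sq_le_two_pow (n p : ℕ) : n * p ^ 2 ≤ 2 ^ (n + 2 * p) :=
  calc n * p ^ 2 ≤ 2 ^ n * (2 ^ p) ^ 2 := by
        gcongr
        · exact Nat.lt_two_pow_self.le
        · exact Nat.lt_two_pow_self.le
    _ = 2 ^ (n + 2 * p) := by ring

theorem coeff_add_coeff_lt_two_pow (n : ℕ) {p : ℕ} (hp : 1 ≤ p) :
    3 * (1 + 44 ^ 2 * (n : ℝ) ^ 2 * (p : ℝ) ^ 4) + 12 * 5 ^ 2 * (n : ℝ) * (p : ℝ) ^ 2 <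
      2 ^ ((2 * n + 18) * p) := by
  have mul_sq_le : (n : ℝ) * (p : ℝ) ^ 2 ≤ 2 ^ (n + 2 * p) := mod_cast mul_sq_le_two_pow n p
  have one_le : (1 : ℝ) ≤ 2 ^ (n + 2 * p) := one_le_pow₀ one_le_two
  have exponent_le : 13 + 2 * (n + 2 * p) ≤ (2 * n + 18) * p := by nlinarith
  calc 3 * (1 + 44 ^ 2 * (n : ℝ) ^ 2 * (p : ℝ) ^ 4) + 12 * 5 ^ 2 * (n : ℝ) * (p : ℝ) ^ 2
      = 3 + 5808 * ((n : ℝ) * (p : ℝ) ^ 2) ^ 2 + 300 * ((n : ℝ) * (p : ℝ) ^ 2) := by ring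
    _ ≤ 3 + 5808 * (2 ^ (n + 2 * p)) ^ 2 + 300 * 2 ^ (n + 2 * p) := by gcongr
    _ < 2 ^ 13 * (2 ^ (n + 2 * p)) ^ 2 := by nlinarith
    _ = 2 ^ (13 + 2 * (n + 2 * p)) := by ring
    _ ≤ 2 ^ ((2 * n + 18) * p) := pow_le_pow_right₀ one_le_two exponent_le

theorem stmt11_general (n p q : ℕ) (hp : 1 ≤ p) (hq : 1 ≤ q) (D : ℕ → ℝ)
    (hD0 : D 0 = 1)
    (hD1 : D 1 = 3 * (1 + 44 ^ 2 * (n : ℝ) ^ 2 * (p : ℝ) ^ 4 + 4 * 5 ^ 2 * n * (p : ℝ) ^ 2))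
    (hrec : ∀ q : ℕ, 2 ≤ q →
      D q = 3 * (1 + 44 ^ 2 * (n : ℝ) ^ 2 * (p : ℝ) ^ 4) * D (q - 2) +
        12 * 5 ^ 2 * (n : ℝ) * (p : ℝ) ^ 2 * D (q - 1)) :
    D q < 2 ^ ((2 * n + 18) * p * q) := by
  set a : ℝ := 3 * (1 + 44 ^ 2 * (n : ℝ) ^ 2 * (p : ℝ) ^ 4) with ha
  set b : ℝ := 12 * 5 ^ 2 * (n : ℝ) * (p : ℝ) ^ 2 with hb
  have a_nonneg : 0 ≤ a := by positivity
  have b_nonneg : 0 ≤ b := by positivity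
  have one_le_add : 1 ≤ a + b := by
    have : 0 ≤ (n : ℝ) ^ 2 * (p : ℝ) ^ 4 := by positivity
    linarith
  have D_one : D 1 = a + b := by
    rw [hD1, ha, hb]
    ring
  calc D q ≤ (a + b) ^ q :=
        le_add_pow_of_le_mul_add_mul a_nonneg b_nonneg one_le_add hD0.le D_one.le
          (fun k ↦ (hrec (k + 2) le_add_self).le) q
    _ < (2 ^ ((2 * n + 18) * p)) ^ q :=
        pow_lt_pow_left₀ (coeff_add_coeff_lt_two_pow n hp) (by positivity) (by omega)
    _ = 2 ^ ((2 * n + 18) * p * q) := (pow_mul _ _ _).symm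

/-- for the sequence `D_q` defined by `D₀ = 1`,
`D₁ = 3(1 + 44²n²p⁴ + 4·5²np²)` and
`D_q = 3(1 + 44²n²p⁴) D_{q−2} + 12·5²np² D_{q−1}` for `q ≥ 2`,
one has `D_p < 2^{(2n+18)p²}`. -/
theorem stmt11 (n p : ℕ) (hn : 2 ≤ n) (hp : 1 ≤ p) (D : ℕ → ℝ)
    (hD0 : D 0 = 1)
    (hD1 : D 1 = 3 * (1 + 44 ^ 2 * (n : ℝ) ^ 2 * (p : ℝ) ^ 4 + 4 * 5 ^ 2 * n * (p : ℝ) ^ 2))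
    (hrec : ∀ q : ℕ, 2 ≤ q →
      D q = 3 * (1 + 44 ^ 2 * (n : ℝ) ^ 2 * (p : ℝ) ^ 4) * D (q - 2) +
        12 * 5 ^ 2 * (n : ℝ) * (p : ℝ) ^ 2 * D (q - 1)) :
    D p < 2 ^ ((2 * n + 18) * p ^ 2) := by
  rw [pow_two, ← mul_assoc]
  exact stmt11_general n p p hp hp D hD0 hD1 hrec
end

section
/- Let f: [a, b] → ℝ be continuously differentiable with max_{[a,b]} |f| = M > 0 and max_{[a,b]} |f′| = M′ > 0. Then there exists a closed subinterval [t₁, t₂] ⊆ [a, b] of length t₂ − t₁ ≥ min{ b − a, M/(2M′) } on which |f| ≥ M/2. -/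
/-!
Let `c` be a point where `|f|` attains its maximum `M`. By the mean value inequality
`|f x| ≥ M - M' |x - c|`, which is at least `M / 2` as soon as `|x - c| ≤ M / (2 M')`. The interval
of radius `M / (2 M')` about `c` may stick out of `[a, b]`, but if it does so at one end only
its half on the other side of `c` is long enough, and if at both ends it contains `[a, b]`.
-/

open Set

section OrderedGroup

variable {G : Type*} [AddCommGroup G] [LinearOrder G] [IsOrderedAddMonoid G] {a b c r : G}

theorem min_sub_le_min_add_sub_max_sub (hc : c ∈ Icc a b) (hr : 0 ≤ r) :
    min (b - a) r ≤ min b (c + r) - max a (c - r) := by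
  obtain ⟨hac, hcb⟩ := hc
  rcases le_total a (c - r) with har | hra
  · calc min (b - a) r ≤ r := min_le_right _ _
      _ = c - (c - r) := (sub_sub_cancel c r).symm
      _ ≤ min b (c + r) - (c - r) :=
        sub_le_sub_right (le_min hcb (le_add_of_nonneg_right hr)) _
      _ = min b (c + r) - max a (c - r) := by rw [max_eq_right har]
  rcases le_total (c + r) b with hrb | hbr
  · calc min (b - a) r ≤ r := min_le_right _ _
      _ = c + r - c := (add_sub_cancel_left c r).symm
      _ ≤ c + r - max a (c - r) := sub_le_sub_left (max_le hac (sub_le_self c hr)) _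
      _ = min b (c + r) - max a (c - r) := by rw [min_eq_right hrb]
  · rw [max_eq_left hra, min_eq_left hbr]
    exact min_le_left _ _

theorem exists_Icc_min_le_sub_and_abs_sub_le (hc : c ∈ Icc a b) (hr : 0 ≤ r) :
    ∃ t₁ t₂ : G, a ≤ t₁ ∧ t₁ ≤ t₂ ∧ t₂ ≤ b ∧ min (b - a) r ≤ t₂ - t₁ ∧
      ∀ x ∈ Icc t₁ t₂, |x - c| ≤ r := by
  refine ⟨max a (c - r), min b (c + r), le_max_left _ _, ?_, min_le_left _ _,
    min_sub_le_min_add_sub_max_sub hc hr, ?_⟩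
  · have hleft : max a (c - r) ≤ c := max_le hc.1 (sub_le_self c hr)
    have hright : c ≤ min b (c + r) := le_min hc.2 (le_add_of_nonneg_right hr)
    exact hleft.trans hright
  · rintro x ⟨hx₁, hx₂⟩
    have hleft : c - r ≤ x := (le_max_right _ _).trans hx₁
    have hright : x ≤ c + r := hx₂.trans (min_le_right _ _)
    exact abs_sub_le_iff.2 ⟨sub_le_iff_le_add'.2 hright, sub_le_comm.1 hleft⟩

end OrderedGroup

theorem norm_sub_mul_norm_sub_le_norm_of_norm_derivWithin_le {𝕜 E : Type*} [RCLike 𝕜]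
    [NormedAddCommGroup E] [NormedSpace 𝕜 E] {f : 𝕜 → E} {s : Set 𝕜} {C : ℝ} {c x : 𝕜}
    (hs : Convex ℝ s) (hf : DifferentiableOn 𝕜 f s) (hC : ∀ y ∈ s, ‖derivWithin f s y‖ ≤ C)
    (hc : c ∈ s) (hx : x ∈ s) : ‖f c‖ - C * ‖x - c‖ ≤ ‖f x‖ := by
  have hmvt : ‖f x - f c‖ ≤ C * ‖x - c‖ :=
    hs.norm_image_sub_le_of_norm_derivWithin_le hf hC hc hx
  have htri : ‖f c‖ - ‖f x‖ ≤ ‖f x - f c‖ := norm_sub_rev (f c) (f x) ▸ norm_sub_norm_le _ _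
  linarith

theorem stmt14_general {E : Type*} [NormedAddCommGroup E] [NormedSpace ℝ E] {f : ℝ → E}
    {a b c M' : ℝ} (hf : DifferentiableOn ℝ f (Icc a b))
    (hM' : ∀ x ∈ Icc a b, ‖derivWithin f (Icc a b) x‖ ≤ M') (hM'pos : 0 < M')
    (hc : c ∈ Icc a b) :
    ∃ t₁ t₂ : ℝ, a ≤ t₁ ∧ t₁ ≤ t₂ ∧ t₂ ≤ b ∧
      min (b - a) (‖f c‖ / (2 * M')) ≤ t₂ - t₁ ∧
      ∀ x ∈ Icc t₁ t₂, ‖f c‖ / 2 ≤ ‖f x‖ := by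
  have hr : 0 ≤ ‖f c‖ / (2 * M') := by positivity
  obtain ⟨t₁, t₂, hat₁, ht, ht₂b, hlength, hdist⟩ := exists_Icc_min_le_sub_and_abs_sub_le hc hr
  refine ⟨t₁, t₂, hat₁, ht, ht₂b, hlength, fun x hx ↦ ?_⟩
  have hxab : x ∈ Icc a b := Icc_subset_Icc hat₁ ht₂b hx
  calc ‖f c‖ / 2 = ‖f c‖ - M' * (‖f c‖ / (2 * M')) := by field_simp; ring
    _ ≤ ‖f c‖ - M' * ‖x - c‖ := by gcongr; exact hdist x hx
    _ ≤ ‖f x‖ :=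
      norm_sub_mul_norm_sub_le_norm_of_norm_derivWithin_le (convex_Icc a b) hf hM' hc hxab

/-- if `f` is `C¹` on `[a,b]` with `max |f| = M > 0` and `max |f′| = M′ > 0`,
then there is a closed subinterval `[t₁, t₂] ⊆ [a,b]` of length at least
`min (b−a) (M/(2M′))` on which `|f| ≥ M/2`. -/
theorem stmt14 (a b : ℝ) (hab : a < b) (f : ℝ → ℝ)
    (hf : ContDiffOn ℝ 1 f (Set.Icc a b)) (M M' : ℝ)
    (hM : IsGreatest ((fun x => |f x|) '' Set.Icc a b) M)
    (hM' : IsGreatest ((fun x => |derivWithin f (Set.Icc a b) x|) '' Set.Icc a b) M')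
    (hMpos : 0 < M) (hM'pos : 0 < M') :
    ∃ t₁ t₂ : ℝ, a ≤ t₁ ∧ t₁ ≤ t₂ ∧ t₂ ≤ b ∧
      min (b - a) (M / (2 * M')) ≤ t₂ - t₁ ∧
      ∀ x ∈ Set.Icc t₁ t₂, M / 2 ≤ |f x| := by
  obtain ⟨⟨c, hc, rfl⟩, -⟩ := hM
  exact stmt14_general (hf.differentiableOn one_ne_zero) (forall_mem_image.1 hM'.2) hM'pos hc
end
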